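/- Let m > 2, 1 ≤ n ≤ m, and 0 < 2α_j < 1 for j = 1,…,n; set α = α_1+…+α_n, β = (m−2)/2 + α, and γ = 2^{2β−m} Γ(β) π^{−m/2} ∏_{k=1}^n Γ(α_k)/Γ(2α_k). For x, ξ ∈ ℝ^m with x_j > 0, ξ_j > 0 (j = 1,…,n) and x ≠ ξ, let r² = Σ_{i=1}^m (x_i − ξ_i)² and q(x,ξ) = γ r^{−2β} F_A^{(n)}(β, (α_1,…,α_n); (2α_1,…,2α_n); −4x_1ξ_1/r², …, −4x_nξ_n/r²). Then for each fixed ξ, the function x ↦ q(x,ξ) satisfies the singular elliptic equation Σ_{i=1}^m ∂²q/∂x_i² + Σ_{j=1}^n (2α_j/x_j) ∂q/∂x_j = 0 at every such point x. -/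

import Mathlib

open MeasureTheory Real

/-- The Lauricella function `F_A` (in finitely many variables indexed by `ι`) defined
through its Euler-type integral representation. -/
noncomputable def lauricellaFA {ι : Type*} [Fintype ι] (a : ℝ) (b c x : ι → ℝ) : ℝ :=
  (∏ i, Real.Gamma (c i) / (Real.Gamma (b i) * Real.Gamma (c i - b i))) *
    ∫ u in Set.univ.pi (fun _ : ι => Set.Icc (0 : ℝ) 1),
      (∏ i, u i ^ (b i - 1) * (1 - u i) ^ (c i - b i - 1)) * (1 - ∑ i, x i * u i) ^ (-a)

/-!
The proof is a method of images. By Euler's integral, `r ^ (-2β) * F_A` is, up to a constant, the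
integral over `u ∈ [0, 1] ^ n` of `R ^ (-β)` against the weight `∏ j, (u_j (1 - u_j)) ^ (α_j - 1)`,
where `R = r ^ 2 + ∑ j, 4 x_j ξ_j u_j = |x - η(u)| ^ 2 + ∑ j, 4 ξ_j ^ 2 u_j (1 - u_j)` and the point
`η(u)` moves from `ξ` to its mirror images in the hyperplanes `x_j = 0`. When the singular operator
is applied to `R ^ (-β)`, the value `β = (m - 2) / 2 + ∑ j, α_j` makes the isotropic terms cancel,
and what is left, multiplied by the weight, is the sum over `j` of
`(4 β ξ_j / x_j) ∂/∂u_j [R ^ (-β - 1) ∏ k, (u_k (1 - u_k)) ^ (α_k - 1) * u_j (1 - u_j)]`.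
As `α_j > 0`, the bracket vanishes at `u_j = 0` and at `u_j = 1`, so the integral is zero.
-/

open Set Function
open scoped Topology

section PartialDerivatives

variable {ι E : Type*} [DecidableEq ι] [NormedAddCommGroup E] [NormedSpace ℝ E]

/-- `f' = ∂f/∂x_i` at `x`, as the derivative of `f` along the coordinate line through `x`. -/
def HasPartialDerivAt (f : (ι → ℝ) → E) (f' : E) (x : ι → ℝ) (i : ι) : Prop :=
  HasDerivAt (fun t => f (update x i t)) f' (x i)

theorem HasPartialDerivAt.hasDerivAt_update {f : (ι → ℝ) → E} {f' : E} {x : ι → ℝ} {i : ι} {t : ℝ}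
    (h : HasPartialDerivAt f f' (update x i t) i) :
    HasDerivAt (fun s => f (update x i s)) f' t := by
  simpa [HasPartialDerivAt] using h

theorem hasPartialDerivAt_apply (x : ι → ℝ) (i k : ι) :
    HasPartialDerivAt (fun y => y k) ((Pi.single i 1 : ι → ℝ) k) x i := by
  obtain rfl | hk := eq_or_ne k i
  · simpa [HasPartialDerivAt] using hasDerivAt_id' (x k)
  · simpa [HasPartialDerivAt, hk] using hasDerivAt_const (x i) (x k)

theorem HasPartialDerivAt.rpow_const {f : (ι → ℝ) → ℝ} {f' : ℝ} {x : ι → ℝ} {i : ι}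
    (hf : HasPartialDerivAt f f' x i) (hx : f x ≠ 0) (c : ℝ) :
    HasPartialDerivAt (fun y => f y ^ c) (f' * c * f x ^ (c - 1)) x i := by
  simpa [HasPartialDerivAt] using
    HasDerivAt.rpow_const (p := c) hf (Or.inl (by simpa using hx))

theorem continuous_update_right (x : ι → ℝ) (i : ι) : Continuous (update x i) :=
  continuous_const.update i continuous_id

end PartialDerivatives

section ParametricIntegrals

variable {X E : Type*} [TopologicalSpace X] [T2Space X] [MeasurableSpace X]
  [OpensMeasurableSpace X] [NormedAddCommGroup E] [NormedSpace ℝ E]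
  [SecondCountableTopologyEither X E] {μ : Measure X} {K : Set X} {w : X → ℝ}

theorem hasDerivAt_setIntegral_smul (hK : IsCompact K) (hw : IntegrableOn w K μ) {U : Set ℝ}
    (hU : IsOpen U) {G G' : ℝ → X → E} (hG : ∀ t ∈ U, ContinuousOn (G t) K)
    (hG' : ContinuousOn (uncurry G') (U ×ˢ K))
    (hderiv : ∀ t ∈ U, ∀ u ∈ K, HasDerivAt (fun s => G s u) (G' t u) t) {t : ℝ} (ht : t ∈ U) :
    HasDerivAt (fun s => ∫ u in K, w u • G s u ∂μ) (∫ u in K, w u • G' t u ∂μ) t := by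
  obtain ⟨V, hV, htV, hVU⟩ := exists_compact_subset hU ht
  obtain ⟨C, hC⟩ := (hV.prod hK).exists_bound_of_continuousOn
    (hG'.mono (prod_mono_left hVU))
  have hint : ∀ s ∈ U, IntegrableOn (fun u => w u • G s u) K μ := fun s hs =>
    hw.smul_continuousOn (hG s hs) hK
  have hG't : ContinuousOn (G' t) K := hG'.uncurry_left t ht
  refine (hasDerivAt_integral_of_dominated_loc_of_deriv_le (μ := μ.restrict K)
    (F := fun s u => w u • G s u) (F' := fun s u => w u • G' s u)
    (bound := fun u => ‖w u‖ * C) (mem_interior_iff_mem_nhds.1 htV) ?_ (hint t ht)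
    (hw.smul_continuousOn hG't hK).aestronglyMeasurable ?_ (hw.norm.mul_const C) ?_).2
  · filter_upwards [hU.mem_nhds ht] with s hs using (hint s hs).aestronglyMeasurable
  · filter_upwards [ae_restrict_mem hK.measurableSet] with u hu s hs
    rw [norm_smul]
    exact mul_le_mul_of_nonneg_left (hC (s, u) ⟨hs, hu⟩) (norm_nonneg _)
  · filter_upwards [ae_restrict_mem hK.measurableSet] with u hu s hs
    exact (hderiv s (hVU hs) u hu).const_smul (w u)

theorem hasPartialDerivAt_setIntegral_smul {ι : Type*} [DecidableEq ι] (hK : IsCompact K)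
    (hw : IntegrableOn w K μ) {U : Set (ι → ℝ)} (hU : IsOpen U) {i : ι} {G G' : (ι → ℝ) → X → E}
    (hG : ∀ y ∈ U, ContinuousOn (G y) K) (hG' : ContinuousOn (uncurry G') (U ×ˢ K))
    (hderiv : ∀ y ∈ U, ∀ u ∈ K, HasPartialDerivAt (fun z => G z u) (G' y u) y i)
    {x : ι → ℝ} (hx : x ∈ U) :
    HasPartialDerivAt (fun y => ∫ u in K, w u • G y u ∂μ) (∫ u in K, w u • G' x u ∂μ) x i := by
  have hline := continuous_update_right x i
  have h := hasDerivAt_setIntegral_smul hK hw (hU.preimage hline)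
    (G := fun t => G (update x i t)) (G' := fun t => G' (update x i t))
    (fun t ht => hG _ ht)
    (hG'.comp (f := Prod.map (update x i) id) (hline.prodMap continuous_id).continuousOn
      fun z hz => hz)
    (fun t ht u hu => (hderiv _ ht u hu).hasDerivAt_update) (t := x i) (by simpa using hx)
  simpa [HasPartialDerivAt] using h

end ParametricIntegrals

section SingularLaplacian

variable {ι : Type*} [Fintype ι] [DecidableEq ι] {p : ι → Prop} [DecidablePred p] {α : ι → ℝ}

/-- The operator `f ↦ ∑ i, ∂²f/∂x_i² + ∑ j with p j, (2 α_j / x_j) ∂f/∂x_j`, in which `p` singles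
out the coordinates carrying a singular coefficient. -/
noncomputable def singularLaplacian (p : ι → Prop) [DecidablePred p] (α : ι → ℝ)
    (f : (ι → ℝ) → ℝ) (x : ι → ℝ) : ℝ :=
  (∑ i, deriv (deriv fun t => f (update x i t)) (x i)) +
    ∑ j with p j, 2 * α j / x j * deriv (fun t => f (update x j t)) (x j)

theorem singularLaplacian_congr {f g : (ι → ℝ) → ℝ} {x : ι → ℝ} (h : f =ᶠ[𝓝 x] g) :
    singularLaplacian p α f x = singularLaplacian p α g x := by
  have hline : ∀ i, (fun t => f (update x i t)) =ᶠ[𝓝 (x i)] fun t => g (update x i t) := fun i => by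
    have := (continuous_update_right x i).tendsto (x i)
    rw [update_eq_self] at this
    exact this.eventually h
  simp only [singularLaplacian, (hline _).deriv_eq, (hline _).deriv.deriv_eq]

theorem singularLaplacian_const_mul (c : ℝ) (f : (ι → ℝ) → ℝ) (x : ι → ℝ) :
    singularLaplacian p α (fun y => c * f y) x = c * singularLaplacian p α f x := by
  simp only [singularLaplacian, deriv_const_mul_field, deriv_const_mul_field', mul_left_comm _ c,
    Finset.mul_sum, mul_add]

theorem singularLaplacian_eq_of_hasPartialDerivAt {f : (ι → ℝ) → ℝ} {f₁ f₂ : ι → (ι → ℝ) → ℝ}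
    {U : Set (ι → ℝ)} (hU : IsOpen U) {x : ι → ℝ} (hx : x ∈ U)
    (h₁ : ∀ i, ∀ y ∈ U, HasPartialDerivAt f (f₁ i y) y i)
    (h₂ : ∀ i, HasPartialDerivAt (f₁ i) (f₂ i x) x i) :
    singularLaplacian p α f x = (∑ i, f₂ i x) + ∑ j with p j, 2 * α j / x j * f₁ j x := by
  have hderiv : ∀ i, (deriv fun t => f (update x i t)) =ᶠ[𝓝 (x i)] fun t => f₁ i (update x i t) :=
    fun i => by
      have hmem : update x i ⁻¹' U ∈ 𝓝 (x i) :=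
        (hU.preimage (continuous_update_right x i)).mem_nhds (by simpa using hx)
      filter_upwards [hmem] with t ht using (h₁ i _ ht).hasDerivAt_update.deriv
  simp only [singularLaplacian, (hderiv _).deriv_eq, (h₂ _).deriv, (h₁ _ x hx).deriv]

theorem singularLaplacian_setIntegral {X : Type*} [TopologicalSpace X] [T2Space X]
    [MeasurableSpace X] [OpensMeasurableSpace X] {μ : Measure X} {K : Set X} {w : X → ℝ}
    (hK : IsCompact K) (hw : IntegrableOn w K μ) {U : Set (ι → ℝ)} (hU : IsOpen U)
    {G : (ι → ℝ) → X → ℝ} {G₁ G₂ : ι → (ι → ℝ) → X → ℝ} (hG : ∀ y ∈ U, ContinuousOn (G y) K)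
    (hG₁ : ∀ i, ContinuousOn (uncurry (G₁ i)) (U ×ˢ K))
    (hG₂ : ∀ i, ContinuousOn (uncurry (G₂ i)) (U ×ˢ K))
    (h₁ : ∀ i, ∀ y ∈ U, ∀ u ∈ K, HasPartialDerivAt (fun z => G z u) (G₁ i y u) y i)
    (h₂ : ∀ i, ∀ y ∈ U, ∀ u ∈ K, HasPartialDerivAt (fun z => G₁ i z u) (G₂ i y u) y i)
    {x : ι → ℝ} (hx : x ∈ U) :
    singularLaplacian p α (fun y => ∫ u in K, w u * G y u ∂μ) x =
      ∫ u in K, w u * singularLaplacian p α (fun y => G y u) x ∂μ := by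
  have hpoint : ∀ u ∈ K, w u * singularLaplacian p α (fun y => G y u) x =
      (∑ i, w u * G₂ i x u) + ∑ j with p j, 2 * α j / x j * (w u * G₁ j x u) := fun u hu => by
    rw [singularLaplacian_eq_of_hasPartialDerivAt hU hx (f₁ := fun i y => G₁ i y u)
      (f₂ := fun i y => G₂ i y u) (fun i y hy => h₁ i y hy u hu) (fun i => h₂ i x hx u hu),
      mul_add, Finset.mul_sum, Finset.mul_sum]
    simp only [mul_left_comm]
  have hint₁ : ∀ i, IntegrableOn (fun u => w u * G₁ i x u) K μ := fun i =>
    hw.mul_continuousOn ((hG₁ i).uncurry_left x hx) hK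
  have hint₂ : ∀ i, IntegrableOn (fun u => w u * G₂ i x u) K μ := fun i =>
    hw.mul_continuousOn ((hG₂ i).uncurry_left x hx) hK
  rw [setIntegral_congr_fun hK.measurableSet hpoint,
    integral_add (integrable_finsetSum _ fun i _ => hint₂ i)
      (integrable_finsetSum _ fun j _ => (hint₁ j).const_mul _),
    integral_finsetSum _ (fun i _ => hint₂ i),
    integral_finsetSum _ (fun j _ => (hint₁ j).const_mul _)]
  simp only [integral_const_mul]
  refine singularLaplacian_eq_of_hasPartialDerivAt hU hx
    (f₁ := fun i y => ∫ u in K, w u * G₁ i y u ∂μ) (f₂ := fun i y => ∫ u in K, w u * G₂ i y u ∂μ)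
    (fun i y hy => hasPartialDerivAt_setIntegral_smul hK hw hU hG (hG₁ i) (h₁ i) hy)
    (fun i => hasPartialDerivAt_setIntegral_smul hK hw hU
      (fun y hy => (hG₁ i).uncurry_left y hy) (hG₂ i) (h₂ i) hx)

end SingularLaplacian

section BetaWeights

theorem integrableOn_rpow_mul_one_sub_rpow {a b : ℝ} (ha : 0 < a) (hb : 0 < b) :
    IntegrableOn (fun s : ℝ => s ^ (a - 1) * (1 - s) ^ (b - 1)) (Icc 0 1) := by
  have h := Complex.betaIntegral_convergent (u := (a : ℂ)) (v := (b : ℂ)) (by simpa) (by simpa)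
  rw [intervalIntegrable_iff_integrableOn_Icc_of_le zero_le_one] at h
  refine IntegrableOn.congr_fun h.re (fun s hs => ?_) measurableSet_Icc
  have hs1 : (0 : ℝ) ≤ 1 - s := sub_nonneg.2 hs.2
  have hcast : (s : ℂ) ^ ((a : ℂ) - 1) * (1 - (s : ℂ)) ^ ((b : ℂ) - 1) =
      ((s ^ (a - 1) * (1 - s) ^ (b - 1) : ℝ) : ℂ) := by
    push_cast [Complex.ofReal_cpow hs.1, Complex.ofReal_cpow hs1]
    rfl
  simp [hcast, -Complex.ofReal_mul]

theorem rpow_mul_one_sub_rpow_eq {a b s : ℝ} (ha : a ≠ 0) (hb : b ≠ 0) (hs : s ∈ Icc (0 : ℝ) 1) :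
    s ^ a * (1 - s) ^ b = s ^ (a - 1) * (1 - s) ^ (b - 1) * (s * (1 - s)) := by
  have hsa : s ^ a = s ^ (a - 1) * s := by
    rw [← rpow_add_one' hs.1 (by simpa using ha), sub_add_cancel]
  have hsb : (1 - s) ^ b = (1 - s) ^ (b - 1) * (1 - s) := by
    rw [← rpow_add_one' (sub_nonneg.2 hs.2) (by simpa using hb), sub_add_cancel]
  rw [hsa, hsb]
  ring

theorem hasDerivAt_rpow_mul_one_sub_rpow (a b : ℝ) {s : ℝ} (hs₀ : s ≠ 0) (hs₁ : 1 - s ≠ 0) :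
    HasDerivAt (fun s : ℝ => s ^ a * (1 - s) ^ b)
      (s ^ (a - 1) * (1 - s) ^ (b - 1) * (a * (1 - s) - b * s)) s := by
  refine (((hasDerivAt_id s).rpow_const (Or.inl hs₀)).mul
    (((hasDerivAt_id s).const_sub 1).rpow_const (p := b) (Or.inl hs₁))).congr_deriv ?_
  simp only [id, rpow_sub_one hs₀, rpow_sub_one hs₁]
  field_simp
  ring

theorem setIntegral_rpow_mul_one_sub_rpow_by_parts {a b : ℝ} (ha : 0 < a) (hb : 0 < b)
    {f f' : ℝ → ℝ} (hf : ∀ s ∈ Icc (0 : ℝ) 1, HasDerivAt f (f' s) s)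
    (hf' : ContinuousOn f' (Icc 0 1)) :
    ∫ s in Icc (0 : ℝ) 1, s ^ (a - 1) * (1 - s) ^ (b - 1) *
      ((a * (1 - s) - b * s) * f s + s * (1 - s) * f' s) = 0 := by
  have hpow : Continuous fun s : ℝ => s ^ a * (1 - s) ^ b :=
    (continuous_rpow_const ha.le).mul
      ((continuous_rpow_const hb.le).comp (continuous_const.sub continuous_id))
  have hint : IntegrableOn
      (fun s : ℝ => s ^ (a - 1) * (1 - s) ^ (b - 1) * (a * (1 - s) - b * s)) (Icc 0 1) :=
    (integrableOn_rpow_mul_one_sub_rpow ha hb).mul_continuousOn (by fun_prop) isCompact_Icc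
  have hparts := intervalIntegral.integral_deriv_mul_eq_sub_of_hasDerivAt (v := f)
    hpow.continuousOn (fun s hs => ?_) (fun s hs => ?_) (fun s hs => ?_)
    ((intervalIntegrable_iff_integrableOn_Icc_of_le zero_le_one).2 hint)
    ((intervalIntegrable_iff_integrableOn_Icc_of_le zero_le_one).2
      (hf'.integrableOn_compact isCompact_Icc))
  · rw [intervalIntegral.integral_of_le zero_le_one, ← integral_Icc_eq_integral_Ioc] at hparts
    refine (setIntegral_congr_fun measurableSet_Icc fun s hs => ?_).trans (hparts.trans ?_)
    · simp only [rpow_mul_one_sub_rpow_eq ha.ne' hb.ne' hs]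
      ring
    · simp [zero_rpow ha.ne', zero_rpow hb.ne']
  · rw [uIcc_of_le zero_le_one] at hs
    exact (hf s hs).continuousAt.continuousWithinAt
  · rw [min_eq_left zero_le_one, max_eq_right zero_le_one] at hs
    exact hasDerivAt_rpow_mul_one_sub_rpow a b hs.1.ne' (sub_pos.2 hs.2).ne'
  · rw [min_eq_left zero_le_one, max_eq_right zero_le_one] at hs
    exact hf s (Ioo_subset_Icc_self hs)

theorem measurePreserving_update {ι : Type*} [Fintype ι] [DecidableEq ι] {S : ι → Type*}
    [∀ i, MeasurableSpace (S i)] (μ : ∀ i, Measure (S i)) [∀ i, IsProbabilityMeasure (μ i)]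
    (j : ι) :
    MeasurePreserving (fun z : (∀ i, S i) × S j => update z.1 j z.2)
      ((Measure.pi μ).prod (μ j)) (Measure.pi μ) := by
  have hmeas : Measurable fun z : (∀ i, S i) × S j => update z.1 j z.2 := measurable_update'
  refine ⟨hmeas, (Measure.pi_eq fun s hs => ?_).symm⟩
  have hpre : (fun z : (∀ i, S i) × S j => update z.1 j z.2) ⁻¹' univ.pi s =
      univ.pi (update s j univ) ×ˢ s j := by
    ext z
    simp only [mem_preimage, update_mem_pi_iff, mem_univ, true_imp_iff, mem_prod,
      and_congr_left_iff]
    intro _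
    grind
  rw [Measure.map_apply hmeas (MeasurableSet.univ_pi hs), hpre, Measure.prod_prod, Measure.pi_pi,
    ← Finset.mul_prod_erase _ _ (Finset.mem_univ j),
    ← Finset.mul_prod_erase _ (fun i => μ i (s i)) (Finset.mem_univ j), update_self, measure_univ,
    one_mul, mul_comm]
  congr 1
  exact Finset.prod_congr rfl fun i hi => by rw [update_of_ne (Finset.ne_of_mem_erase hi)]

theorem integral_pi_eq_integral_integral_update {ι E : Type*} [Fintype ι] [DecidableEq ι]
    {S : ι → Type*} [∀ i, MeasurableSpace (S i)] {μ : ∀ i, Measure (S i)}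
    [∀ i, IsProbabilityMeasure (μ i)] [NormedAddCommGroup E] [NormedSpace ℝ E]
    {f : (∀ i, S i) → E} (hf : Integrable f (Measure.pi μ)) (j : ι) :
    ∫ u, f u ∂Measure.pi μ = ∫ u, ∫ s, f (update u j s) ∂μ j ∂Measure.pi μ := by
  have hmp := measurePreserving_update μ j
  have hf' := hf.aestronglyMeasurable
  rw [← hmp.map_eq] at hf'
  conv_lhs => rw [← hmp.map_eq]
  rw [integral_map hmp.measurable.aemeasurable hf']
  exact integral_prod _ ((hmp.integrable_comp hf.aestronglyMeasurable).2 hf)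

variable {ι : Type*}

/-- The domain of integration of the Euler integral. -/
def unitCube (ι : Type*) : Set (ι → ℝ) := univ.pi fun _ => Icc 0 1

theorem isCompact_unitCube : IsCompact (unitCube ι) := isCompact_univ_pi fun _ => isCompact_Icc

theorem update_mem_unitCube [DecidableEq ι] {u : ι → ℝ} (hu : u ∈ unitCube ι) (j : ι) {s : ℝ}
    (hs : s ∈ Icc (0 : ℝ) 1) : update u j s ∈ unitCube ι :=
  (update_mem_pi_iff_of_mem hu).2 fun _ => hs

variable [Fintype ι]

theorem volume_restrict_unitCube : (volume : Measure (ι → ℝ)).restrict (unitCube ι) =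
    Measure.pi fun _ => volume.restrict (Icc 0 1) :=
  Measure.restrict_pi_pi (fun _ => (volume : Measure ℝ)) _

/-- The unnormalised density of a product of beta distributions with parameters `(a i, b i)`. The
Euler integral of `lauricellaFA _ b c _` is taken against `betaWeight b (c - b)`. -/
noncomputable def betaWeight (a b : ι → ℝ) (u : ι → ℝ) : ℝ :=
  ∏ i, u i ^ (a i - 1) * (1 - u i) ^ (b i - 1)

theorem integrableOn_betaWeight {a b : ι → ℝ} (ha : ∀ i, 0 < a i) (hb : ∀ i, 0 < b i) :
    IntegrableOn (betaWeight a b) (unitCube ι) := by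
  rw [IntegrableOn, volume_restrict_unitCube]
  exact Integrable.fintype_prod (f := fun i s => s ^ (a i - 1) * (1 - s) ^ (b i - 1))
    fun i => integrableOn_rpow_mul_one_sub_rpow (ha i) (hb i)

theorem betaWeight_update [DecidableEq ι] (a b u : ι → ℝ) (j : ι) (s : ℝ) :
    betaWeight a b (update u j s) =
      (∏ i ∈ Finset.univ.erase j, u i ^ (a i - 1) * (1 - u i) ^ (b i - 1)) *
        (s ^ (a j - 1) * (1 - s) ^ (b j - 1)) := by
  rw [betaWeight, ← Finset.prod_erase_mul _ _ (Finset.mem_univ j), update_self]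
  congr 1
  exact Finset.prod_congr rfl fun i hi => by rw [update_of_ne (Finset.ne_of_mem_erase hi)]

theorem setIntegral_betaWeight_by_parts [DecidableEq ι] {a b : ι → ℝ} (ha : ∀ i, 0 < a i)
    (hb : ∀ i, 0 < b i) (j : ι) {F F' : (ι → ℝ) → ℝ} (hF : ContinuousOn F (unitCube ι))
    (hF' : ContinuousOn F' (unitCube ι))
    (hderiv : ∀ u ∈ unitCube ι, HasPartialDerivAt F (F' u) u j) :
    ∫ u in unitCube ι, betaWeight a b u *
      ((a j * (1 - u j) - b j * u j) * F u + u j * (1 - u j) * F' u) = 0 := by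
  have hint : IntegrableOn (fun u => betaWeight a b u *
      ((a j * (1 - u j) - b j * u j) * F u + u j * (1 - u j) * F' u)) (unitCube ι) :=
    (integrableOn_betaWeight ha hb).mul_continuousOn (by fun_prop) isCompact_unitCube
  have : IsProbabilityMeasure ((volume : Measure ℝ).restrict (Icc 0 1)) := ⟨by simp⟩
  rw [IntegrableOn, volume_restrict_unitCube] at hint
  rw [volume_restrict_unitCube, integral_pi_eq_integral_integral_update hint j,
    ← volume_restrict_unitCube]
  refine setIntegral_eq_zero_of_forall_eq_zero fun u hu => ?_
  have hmem : ∀ s ∈ Icc (0 : ℝ) 1, update u j s ∈ unitCube ι := fun s hs =>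
    update_mem_unitCube hu j hs
  have hslice := setIntegral_rpow_mul_one_sub_rpow_by_parts (ha j) (hb j)
    (fun s hs => (hderiv _ (hmem s hs)).hasDerivAt_update)
    (hF'.comp (continuous_update_right u j).continuousOn hmem)
  simp only [betaWeight_update, update_self, mul_assoc (Finset.prod _ _), integral_const_mul]
  exact mul_eq_zero_of_right _ hslice

end BetaWeights

section LauricellaIntegral

variable {ι : Type*} [Fintype ι]

theorem rpow_neg_mul_lauricellaFA {r : ℝ} (hr : 0 < r) (a : ℝ) (b c : ι → ℝ) {y : ι → ℝ}
    (hy : ∀ u ∈ unitCube ι, ∑ i, y i * u i ≤ r) :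
    r ^ (-a) * lauricellaFA a b c (fun i => y i / r) =
      (∏ i, Gamma (c i) / (Gamma (b i) * Gamma (c i - b i))) *
        ∫ u in unitCube ι, betaWeight b (c - b) u * (r - ∑ i, y i * u i) ^ (-a) := by
  rw [lauricellaFA, mul_left_comm, ← integral_const_mul]
  congr 1
  refine setIntegral_congr_fun isCompact_unitCube.measurableSet fun u hu => ?_
  have hscale : r - ∑ i, y i * u i = r * (1 - ∑ i, y i / r * u i) := by
    simp only [mul_sub, Finset.mul_sum, ← mul_assoc, mul_div_cancel₀ _ hr.ne', mul_one]
  have hnonneg : 0 ≤ 1 - ∑ i, y i / r * u i :=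
    nonneg_of_mul_nonneg_right (hscale ▸ sub_nonneg.2 (hy u hu)) hr
  rw [hscale, mul_rpow hr.le hnonneg]
  simp only [betaWeight, Pi.sub_apply]
  ring

end LauricellaIntegral

section ImagePoints

variable {ι : Type*} {p : ι → Prop}

/-- The points that cannot be obtained from `ξ` by changing the sign of coordinates satisfying
`p`. -/
def offImages (p : ι → Prop) (ξ : ι → ℝ) : Set (ι → ℝ) :=
  {x | ∃ k, x k ≠ ξ k ∧ (p k → x k ≠ -ξ k)}

theorem isOpen_offImages (p : ι → Prop) (ξ : ι → ℝ) : IsOpen (offImages p ξ) := by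
  simp only [offImages, ofPred_exists, ofPred_and, imp_iff_not_or, ofPred_or]
  exact isOpen_iUnion fun k => (isOpen_ne_fun (continuous_apply k) continuous_const).inter
    (isOpen_const.union (isOpen_ne_fun (continuous_apply k) continuous_const))

theorem ne_of_mem_offImages {x ξ : ι → ℝ} (hx : x ∈ offImages p ξ) : x ≠ ξ :=
  fun h => hx.elim fun k hk => hk.1 (congr_fun h k)

theorem sum_sq_sub_pos [Fintype ι] {x ξ : ι → ℝ} (hx : x ≠ ξ) : 0 < ∑ i, (x i - ξ i) ^ 2 := by
  obtain ⟨k, hk⟩ := Function.ne_iff.1 hx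
  exact Finset.sum_pos' (fun i _ => sq_nonneg _)
    ⟨k, Finset.mem_univ k, sq_pos_of_ne_zero (sub_ne_zero.2 hk)⟩

variable [DecidablePred p]

/-- The point obtained from `ξ` by replacing the coordinate `ξ j` by `(1 - 2 * u j) * ξ j` whenever
`p j`: as `u j` runs from `0` to `1`, it moves from `ξ` to the mirror image of `ξ` in the
hyperplane where the `j`-th coordinate vanishes. -/
def imagePoint (ξ : ι → ℝ) (u : {i // p i} → ℝ) (i : ι) : ℝ :=
  if h : p i then (1 - 2 * u ⟨i, h⟩) * ξ i else ξ i

theorem imagePoint_coe (ξ : ι → ℝ) (u : {i // p i} → ℝ) (j : {i // p i}) :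
    imagePoint ξ u j = (1 - 2 * u j) * ξ j :=
  dif_pos j.2

theorem imagePoint_of_not (ξ : ι → ℝ) (u : {i // p i} → ℝ) {i : ι} (hi : ¬p i) :
    imagePoint ξ u i = ξ i :=
  dif_neg hi

@[fun_prop]
theorem continuous_imagePoint (ξ : ι → ℝ) (i : ι) :
    Continuous fun u : {i // p i} → ℝ => imagePoint ξ u i := by
  by_cases hi : p i
  · simp only [imagePoint, dif_pos hi]
    fun_prop
  · simpa only [imagePoint_of_not _ _ hi] using continuous_const

variable [Fintype ι]

/-- The quantity `r² + ∑ j, 4 x_j ξ_j u_j`, where `r = |x - ξ|`, whose power is integrated in the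
Euler integral of the fundamental solution (see `imageDistSq_eq`). This expression for it is
visibly nonnegative for `u` in the unit cube, and is a squared distance plus a term independent of
`x`. -/
def imageDistSq (x ξ : ι → ℝ) (u : {i // p i} → ℝ) : ℝ :=
  (∑ i, (x i - imagePoint ξ u i) ^ 2) + ∑ j : {i // p i}, 4 * ξ j ^ 2 * (u j * (1 - u j))

theorem imageDistSq_eq (x ξ : ι → ℝ) (u : {i // p i} → ℝ) :
    imageDistSq x ξ u = (∑ i, (x i - ξ i) ^ 2) + ∑ j : {i // p i}, 4 * x j * ξ j * u j := by
  rw [imageDistSq, ← Fintype.sum_subtype_add_sum_subtype p (fun i => (x i - imagePoint ξ u i) ^ 2),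
    ← Fintype.sum_subtype_add_sum_subtype p (fun i => (x i - ξ i) ^ 2), add_right_comm,
    add_right_comm (∑ j : {i // p i}, (x j - ξ j) ^ 2), ← Finset.sum_add_distrib,
    ← Finset.sum_add_distrib]
  congr 1
  · refine Finset.sum_congr rfl fun j _ => ?_
    rw [imagePoint_coe]
    ring
  · exact Finset.sum_congr rfl fun j _ => by rw [imagePoint_of_not _ _ j.2]

theorem continuous_imageDistSq (ξ : ι → ℝ) :
    Continuous fun z : (ι → ℝ) × ({i // p i} → ℝ) => imageDistSq z.1 ξ z.2 := by
  simp only [imageDistSq_eq]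
  fun_prop

theorem hasPartialDerivAt_imageDistSq_left [DecidableEq ι] (x ξ : ι → ℝ) (u : {i // p i} → ℝ)
    (i : ι) :
    HasPartialDerivAt (fun y => imageDistSq y ξ u) (2 * (x i - imagePoint ξ u i)) x i := by
  have h := (HasDerivAt.fun_sum (u := Finset.univ) fun k _ =>
    ((hasPartialDerivAt_apply x i k).sub_const (imagePoint ξ u k)).pow 2).add_const
      (∑ j : {i // p i}, 4 * ξ j ^ 2 * (u j * (1 - u j)))
  refine HasDerivAt.congr_deriv h ?_
  simp [Pi.single_apply]

theorem hasPartialDerivAt_imageDistSq_right [DecidableEq ι] (x ξ : ι → ℝ) (u : {i // p i} → ℝ)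
    (j : {i // p i}) :
    HasPartialDerivAt (imageDistSq x ξ) (4 * x j * ξ j) u j := by
  have h := (HasDerivAt.fun_sum (u := Finset.univ) fun k _ =>
    (hasPartialDerivAt_apply u j k).const_mul (4 * x k * ξ k)).const_add (∑ i, (x i - ξ i) ^ 2)
  simp only [HasPartialDerivAt, imageDistSq_eq]
  refine h.congr_deriv ?_
  simp [Pi.single_apply]

theorem imageDistSq_pos {x ξ : ι → ℝ} (hx : x ∈ offImages p ξ) {u : {i // p i} → ℝ}
    (hu : u ∈ unitCube {i // p i}) : 0 < imageDistSq x ξ u := by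
  have hterm : ∀ j : {i // p i}, 0 ≤ 4 * ξ j ^ 2 * (u j * (1 - u j)) := fun j =>
    mul_nonneg (by positivity) (mul_nonneg (hu j trivial).1 (sub_nonneg.2 (hu j trivial).2))
  by_cases hxu : x = imagePoint ξ u
  · obtain ⟨k, hk, hpk⟩ := hx
    have hp : p k := by
      by_contra hp
      exact hk (by rw [hxu, imagePoint_of_not _ _ hp])
    have hxk : x k = (1 - 2 * u ⟨k, hp⟩) * ξ k := by rw [hxu]; exact imagePoint_coe ξ u ⟨k, hp⟩
    have hξ : ξ k ≠ 0 := fun h => hk (by rw [hxk, h, mul_zero])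
    have hu₀ : u ⟨k, hp⟩ ≠ 0 := fun h => hk (by rw [hxk, h]; ring)
    have hu₁ : u ⟨k, hp⟩ ≠ 1 := fun h => hpk hp (by rw [hxk, h]; ring)
    have hmem := hu ⟨k, hp⟩ trivial
    refine add_pos_of_nonneg_of_pos (Finset.sum_nonneg fun i _ => sq_nonneg _)
      (Finset.sum_pos' (fun j _ => hterm j) ⟨⟨k, hp⟩, Finset.mem_univ _, ?_⟩)
    exact mul_pos (by positivity)
      (mul_pos (hmem.1.lt_of_ne' hu₀) (sub_pos.2 (hmem.2.lt_of_ne hu₁)))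
  · exact add_pos_of_pos_of_nonneg (sum_sq_sub_pos hxu) (Finset.sum_nonneg fun j _ => hterm j)

theorem continuousOn_imageDistSq_rpow {ξ : ι → ℝ} (c : ℝ) :
    ContinuousOn (fun z : (ι → ℝ) × ({i // p i} → ℝ) => imageDistSq z.1 ξ z.2 ^ c)
      (offImages p ξ ×ˢ unitCube {i // p i}) :=
  (continuous_imageDistSq ξ).continuousOn.rpow_const fun _ hz =>
    Or.inl (imageDistSq_pos hz.1 hz.2).ne'

end ImagePoints

section Kernel

variable {ι : Type*} [Fintype ι] [DecidableEq ι] {p : ι → Prop} [DecidablePred p] {α x ξ : ι → ℝ}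
  {u : {i // p i} → ℝ} {β : ℝ}

theorem hasPartialDerivAt_imageDistSq_rpow (hR : imageDistSq x ξ u ≠ 0) (c : ℝ) (i : ι) :
    HasPartialDerivAt (fun y => imageDistSq y ξ u ^ c)
      (2 * c * (x i - imagePoint ξ u i) * imageDistSq x ξ u ^ (c - 1)) x i := by
  refine HasDerivAt.congr_deriv
    ((hasPartialDerivAt_imageDistSq_left x ξ u i).rpow_const hR c) ?_
  ring

theorem hasPartialDerivAt_partialDeriv_imageDistSq_rpow (hR : imageDistSq x ξ u ≠ 0) (c : ℝ)
    (i : ι) :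
    HasPartialDerivAt
      (fun y => 2 * c * (y i - imagePoint ξ u i) * imageDistSq y ξ u ^ (c - 1))
      (2 * c * imageDistSq x ξ u ^ (c - 1) +
        4 * c * (c - 1) * (x i - imagePoint ξ u i) ^ 2 * imageDistSq x ξ u ^ (c - 1 - 1)) x i := by
  have h := (((hasPartialDerivAt_apply x i i).sub_const (imagePoint ξ u i)).const_mul (2 * c)).mul
    (hasPartialDerivAt_imageDistSq_rpow hR (c - 1) i)
  refine HasDerivAt.congr_deriv h ?_
  simp only [update_eq_self, Pi.single_eq_same]
  ring

theorem singularLaplacian_imageDistSq_rpow (hR : 0 < imageDistSq x ξ u) (c : ℝ) :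
    singularLaplacian p α (fun y => imageDistSq y ξ u ^ c) x =
      (∑ i, (2 * c * imageDistSq x ξ u ^ (c - 1) +
        4 * c * (c - 1) * (x i - imagePoint ξ u i) ^ 2 * imageDistSq x ξ u ^ (c - 1 - 1))) +
      ∑ j with p j, 2 * α j / x j *
        (2 * c * (x j - imagePoint ξ u j) * imageDistSq x ξ u ^ (c - 1)) := by
  have hopen : IsOpen {y | 0 < imageDistSq y ξ u} :=
    isOpen_lt continuous_const ((continuous_imageDistSq ξ).uncurry_right u)
  exact singularLaplacian_eq_of_hasPartialDerivAt hopen hR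
    (f₂ := fun i y => 2 * c * imageDistSq y ξ u ^ (c - 1) +
      4 * c * (c - 1) * (y i - imagePoint ξ u i) ^ 2 * imageDistSq y ξ u ^ (c - 1 - 1))
    (fun i y hy => hasPartialDerivAt_imageDistSq_rpow (ne_of_gt hy) c i)
    (fun i => hasPartialDerivAt_partialDeriv_imageDistSq_rpow hR.ne' c i)

/- The summands are, up to a constant, the integrands of `setIntegral_betaWeight_by_parts` for
`F = imageDistSq x ξ ^ (-β - 1)`. -/
theorem singularLaplacian_imageDistSq_rpow_neg
    (hβ : β = ((Fintype.card ι : ℝ) - 2) / 2 + ∑ j with p j, α j)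
    (hx : ∀ j, p j → x j ≠ 0) (hR : 0 < imageDistSq x ξ u) :
    singularLaplacian p α (fun y => imageDistSq y ξ u ^ (-β)) x =
      ∑ j : {i // p i}, 4 * β * ξ j / x j *
        ((α j * (1 - u j) - α j * u j) * imageDistSq x ξ u ^ (-β - 1) +
          u j * (1 - u j) *
            (4 * x j * ξ j * (-β - 1) * imageDistSq x ξ u ^ (-β - 1 - 1))) := by
  set R := imageDistSq x ξ u
  set P := R ^ (-β - 1)
  set Q := R ^ (-β - 1 - 1)
  have hPQ : P = Q * R := by rw [← rpow_add_one hR.ne', sub_add_cancel]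
  have hdist : ∑ i, (x i - imagePoint ξ u i) ^ 2 =
      R - ∑ j : {i // p i}, 4 * ξ j ^ 2 * (u j * (1 - u j)) :=
    (add_sub_cancel_right _ _).symm
  have hcard : (Fintype.card ι : ℝ) = 2 * β + 2 - 2 * ∑ j : {i // p i}, α j := by
    rw [hβ, ← Finset.sum_subtype_eq_sum_filter, Finset.subtype_univ]
    ring
  have hsecond : ∑ i, (2 * -β * P + 4 * -β * (-β - 1) * (x i - imagePoint ξ u i) ^ 2 * Q) =
      ∑ j : {i // p i}, (4 * β * α j * P -
        4 * β * (β + 1) * (4 * ξ j ^ 2 * (u j * (1 - u j))) * Q) := by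
    rw [Finset.sum_add_distrib, Finset.sum_const, Finset.card_univ, nsmul_eq_mul,
      ← Finset.sum_mul, ← Finset.mul_sum, hdist, hcard, Finset.sum_sub_distrib,
      ← Finset.sum_mul, ← Finset.sum_mul, ← Finset.mul_sum, ← Finset.mul_sum, hPQ]
    ring
  rw [singularLaplacian_imageDistSq_rpow hR, hsecond, ← Finset.sum_subtype_eq_sum_filter,
    Finset.subtype_univ, ← Finset.sum_add_distrib]
  refine Finset.sum_congr rfl fun j _ => ?_
  have hxj : x j ≠ 0 := hx j j.2
  rw [imagePoint_coe]
  field_simp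
  ring

theorem setIntegral_betaWeight_mul_singularLaplacian_eq_zero (hα : ∀ j, p j → 0 < α j)
    (hβ : β = ((Fintype.card ι : ℝ) - 2) / 2 + ∑ j with p j, α j)
    (hx : ∀ j, p j → x j ≠ 0) (hxξ : x ∈ offImages p ξ) :
    ∫ u in unitCube {i // p i}, betaWeight (fun j : {i // p i} => α j) (fun j => α j) u *
      singularLaplacian p α (fun y => imageDistSq y ξ u ^ (-β)) x = 0 := by
  have hα' : ∀ j : {i // p i}, 0 < α j := fun j => hα j j.2
  have hcont (c : ℝ) : ContinuousOn (fun u : {i // p i} → ℝ => imageDistSq x ξ u ^ c)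
      (unitCube {i // p i}) :=
    (continuousOn_imageDistSq_rpow c).uncurry_left (f := fun y u => imageDistSq y ξ u ^ c) x hxξ
  have hparts (j : {i // p i}) := setIntegral_betaWeight_by_parts hα' hα' j (hcont (-β - 1))
    ((hcont (-β - 1 - 1)).const_mul (4 * x j * ξ j * (-β - 1))) fun u hu =>
      (hasPartialDerivAt_imageDistSq_right x ξ u j).rpow_const (imageDistSq_pos hxξ hu).ne' _
  have hsum : ∀ u ∈ unitCube {i // p i}, betaWeight (fun j : {i // p i} => α j) (fun j => α j) u *
      singularLaplacian p α (fun y => imageDistSq y ξ u ^ (-β)) x =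
      ∑ j : {i // p i}, 4 * β * ξ j / x j *
        (betaWeight (fun j : {i // p i} => α j) (fun j => α j) u *
          ((α j * (1 - u j) - α j * u j) * imageDistSq x ξ u ^ (-β - 1) +
            u j * (1 - u j) *
              (4 * x j * ξ j * (-β - 1) * imageDistSq x ξ u ^ (-β - 1 - 1)))) := fun u hu => by
    rw [singularLaplacian_imageDistSq_rpow_neg hβ hx (imageDistSq_pos hxξ hu), Finset.mul_sum]
    simp only [mul_left_comm]
  rw [setIntegral_congr_fun isCompact_unitCube.measurableSet hsum, integral_finsetSum]
  · simp only [integral_const_mul, hparts, mul_zero, Finset.sum_const_zero]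
  · refine fun j _ => Integrable.const_mul ?_ _
    exact (integrableOn_betaWeight hα' hα').mul_continuousOn (by fun_prop) isCompact_unitCube

theorem singularLaplacian_setIntegral_betaWeight_eq_zero (hα : ∀ j, p j → 0 < α j)
    (hβ : β = ((Fintype.card ι : ℝ) - 2) / 2 + ∑ j with p j, α j)
    (hx : ∀ j, p j → x j ≠ 0) (hxξ : x ∈ offImages p ξ) :
    singularLaplacian p α (fun y => ∫ u in unitCube {i // p i},
      betaWeight (fun j : {i // p i} => α j) (fun j => α j) u * imageDistSq y ξ u ^ (-β)) x =
      0 := by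
  have hpos : ∀ y ∈ offImages p ξ, ∀ u ∈ unitCube {i // p i}, imageDistSq y ξ u ≠ 0 :=
    fun y hy u hu => (imageDistSq_pos hy hu).ne'
  have hcont (c : ℝ) := continuousOn_imageDistSq_rpow (p := p) (ξ := ξ) c
  rw [singularLaplacian_setIntegral isCompact_unitCube
    (integrableOn_betaWeight (fun j => hα j.1 j.2) fun j => hα j.1 j.2) (isOpen_offImages p ξ)
    (G := fun y u => imageDistSq y ξ u ^ (-β))
    (G₁ := fun i y u => 2 * -β * (y i - imagePoint ξ u i) * imageDistSq y ξ u ^ (-β - 1))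
    (G₂ := fun i y u => 2 * -β * imageDistSq y ξ u ^ (-β - 1) +
      4 * -β * (-β - 1) * (y i - imagePoint ξ u i) ^ 2 * imageDistSq y ξ u ^ (-β - 1 - 1))
    (fun y hy => (hcont (-β)).uncurry_left (f := fun y u => imageDistSq y ξ u ^ (-β)) y hy)
    (fun i => by unfold uncurry; fun_prop) (fun i => by unfold uncurry; fun_prop)
    (fun i y hy u hu => hasPartialDerivAt_imageDistSq_rpow (hpos y hy u hu) (-β) i)
    (fun i y hy u hu => hasPartialDerivAt_partialDeriv_imageDistSq_rpow (hpos y hy u hu) (-β) i)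
    hxξ]
  exact setIntegral_betaWeight_mul_singularLaplacian_eq_zero hα hβ hx hxξ

end Kernel

section FundamentalSolution

variable {ι : Type*} [Fintype ι] {p : ι → Prop} [DecidablePred p]

theorem sum_sq_sub_rpow_neg_mul_lauricellaFA {x ξ : ι → ℝ} (hx : x ∈ offImages p ξ) (β : ℝ)
    (b c : {i // p i} → ℝ) :
    (∑ i, (x i - ξ i) ^ 2) ^ (-β) * lauricellaFA β b c
        (fun j => -4 * x j * ξ j / ∑ i, (x i - ξ i) ^ 2) =
      (∏ j, Gamma (c j) / (Gamma (b j) * Gamma (c j - b j))) *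
        ∫ u in unitCube {i // p i}, betaWeight b (c - b) u * imageDistSq x ξ u ^ (-β) := by
  have hbase (u : {i // p i} → ℝ) :
      imageDistSq x ξ u = (∑ i, (x i - ξ i) ^ 2) - ∑ j : {i // p i}, -4 * x j * ξ j * u j := by
    simp only [imageDistSq_eq, neg_mul, Finset.sum_neg_distrib, sub_neg_eq_add]
  simp only [hbase]
  exact rpow_neg_mul_lauricellaFA (sum_sq_sub_pos (ne_of_mem_offImages hx)) β b c fun u hu =>
    sub_nonneg.1 (hbase u ▸ (imageDistSq_pos hx hu).le)

theorem fundamental_solution_satisfies_equation_general [DecidableEq ι] {α : ι → ℝ}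
    (hα : ∀ j, p j → 0 < α j) {β : ℝ}
    (hβ : β = ((Fintype.card ι : ℝ) - 2) / 2 + ∑ j with p j, α j) (γ : ℝ) {x ξ : ι → ℝ}
    (hx : ∀ j, p j → x j ≠ 0) (hxξ : x ∈ offImages p ξ) :
    singularLaplacian p α (fun y => γ * (∑ i, (y i - ξ i) ^ 2) ^ (-β) *
      lauricellaFA β (fun j : {i // p i} => α j) (fun j => 2 * α j)
        (fun j => -4 * y j * ξ j / ∑ i, (y i - ξ i) ^ 2)) x = 0 := by
  have hweight : (fun j : {i // p i} => 2 * α j) - (fun j : {i // p i} => α j) =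
      fun j : {i // p i} => α j := by
    ext j
    simp only [Pi.sub_apply]
    ring
  have heuler := (isOpen_offImages p ξ).eventually_mem hxξ |>.mono fun y hy =>
    (mul_assoc γ _ _).trans (congr_arg (γ * ·) (sum_sq_sub_rpow_neg_mul_lauricellaFA hy β
      (fun j : {i // p i} => α j) fun j => 2 * α j))
  rw [singularLaplacian_congr heuler, hweight, singularLaplacian_const_mul,
    singularLaplacian_const_mul, singularLaplacian_setIntegral_betaWeight_eq_zero hα hβ hx hxξ,
    mul_zero, mul_zero]

end FundamentalSolution

/-- The fundamental solution
`q(x,ξ) = γ r^{−2β} F_A^{(n)}(β, α; 2α; −4x_1ξ_1/r², …, −4x_nξ_n/r²)` satisfies, as a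
function of `x`, the singular elliptic equation
`Σ_{i=1}^m ∂²q/∂x_i² + Σ_{j=1}^n (2α_j/x_j) ∂q/∂x_j = 0` at every point of the open
orthant with `x ≠ ξ`. -/
theorem fundamental_solution_satisfies_equation (m n : ℕ) (hm : 2 < m) (hn : 1 ≤ n)
    (hnm : n ≤ m) (α : Fin m → ℝ)
    (hα : ∀ j : Fin m, (j : ℕ) < n → 0 < 2 * α j ∧ 2 * α j < 1)
    (β γ : ℝ)
    (hβ : β = ((m : ℝ) - 2) / 2 + ∑ j ∈ Finset.univ.filter fun j : Fin m => (j : ℕ) < n, α j)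
    (hγ : γ = 2 ^ (2 * β - (m : ℝ)) * Real.Gamma β / Real.pi ^ ((m : ℝ) / 2) *
      ∏ j ∈ Finset.univ.filter fun j : Fin m => (j : ℕ) < n,
        Real.Gamma (α j) / Real.Gamma (2 * α j))
    (q : (Fin m → ℝ) → (Fin m → ℝ) → ℝ)
    (hq : ∀ x ξ : Fin m → ℝ, q x ξ =
      γ * (∑ i, (x i - ξ i) ^ 2) ^ (-β) *
        lauricellaFA β (fun j : {i : Fin m // (i : ℕ) < n} => α j.1)
          (fun j => 2 * α j.1)
          (fun j => -4 * x j.1 * ξ j.1 / ∑ i, (x i - ξ i) ^ 2))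
    (x ξ : Fin m → ℝ) (hx : ∀ j : Fin m, (j : ℕ) < n → 0 < x j)
    (hξ : ∀ j : Fin m, (j : ℕ) < n → 0 < ξ j) (hne : x ≠ ξ) :
    (∑ i : Fin m, deriv (deriv fun t : ℝ => q (Function.update x i t) ξ) (x i)) +
      ∑ j ∈ Finset.univ.filter fun j : Fin m => (j : ℕ) < n,
        2 * α j / x j * deriv (fun t : ℝ => q (Function.update x j t) ξ) (x j) = 0 := by
  have hxξ : x ∈ offImages (fun i : Fin m => (i : ℕ) < n) ξ := by
    obtain ⟨k, hk⟩ := Function.ne_iff.1 hne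
    exact ⟨k, hk, fun hkn => ((neg_lt_zero.2 (hξ k hkn)).trans (hx k hkn)).ne'⟩
  simp only [hq]
  exact fundamental_solution_satisfies_equation_general
    (fun j hj => pos_of_mul_pos_right (hα j hj).1 zero_le_two) (by simpa using hβ) γ
    (fun j hj => (hx j hj).ne') hxξ
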